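/- For every state vector U = (f, b, g, q) ∈ ℝ⁴ and every λ ∈ ℝ, the characteristic polynomial of the flux Jacobian DF(U) factorizes as det(λ·I₄ − DF(U)) = (λ − fb/2)·(λ − 3fb/2)·(λ − (fb + gq/2))·(λ − (fb + 3gq/2)). -/

import Mathlib

/-- Flux Jacobian of the reduced two-phase thin-film system. -/
noncomputable def fluxJacobian (f b g q : ℝ) : Matrix (Fin 4) (Fin 4) ℝ :=
  !![f*b,   f^2/2, 0,       0;
     b^2/2, f*b,   0,       0;
     g*b,   f*g,   f*b+g*q, g^2/2;
     b*q,   f*q,   q^2/2,   f*b+g*q]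

/-! The Jacobian is block lower triangular because the equations for `(f, b)` do not involve
`(g, q)`. Both diagonal blocks have the form `[[a, x²/2], [y²/2, a]]`, whose off-diagonal product is
the square of `xy/2`, so their eigenvalues are `a ± xy/2`, with `a = fb` in the first block and
`a = fb + gq` in the second. -/

open Polynomial

theorem charpoly_fin_two_of_sq_eq_mul {R : Type*} [CommRing R] (a : R) {β γ s : R}
    (hs : s ^ 2 = β * γ) :
    !![a, β; γ, a].charpoly = (X - C (a - s)) * (X - C (a + s)) := by
  nontriviality R
  rw [Matrix.charpoly_fin_two, Matrix.trace_fin_two_of, Matrix.det_fin_two_of, ← hs]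
  simp only [C_add, C_sub, C_mul, C_pow]
  ring

/-- The flux Jacobian of a single phase with flux `(x²y/2, xy²/2)`, advected with the additional
velocity `c`. Each diagonal block of `fluxJacobian` is of this form: the first phase has `c = 0`,
and the second is carried by the first with `c = fb`. -/
def advectedPhaseJacobian {K : Type*} [Field K] (c x y : K) : Matrix (Fin 2) (Fin 2) K :=
  !![c + x * y, x ^ 2 / 2;
     y ^ 2 / 2, c + x * y]

theorem charpoly_advectedPhaseJacobian {K : Type*} [Field K] [NeZero (2 : K)] (c x y : K) :
    (advectedPhaseJacobian c x y).charpoly =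
      (X - C (c + x * y / 2)) * (X - C (c + 3 * (x * y) / 2)) := by
  have h_sq : (x * y / 2) ^ 2 = x ^ 2 / 2 * (y ^ 2 / 2) := by ring
  have h_sub : c + x * y - x * y / 2 = c + x * y / 2 := by field_simp; ring
  have h_add : c + x * y + x * y / 2 = c + 3 * (x * y) / 2 := by field_simp; ring
  rw [advectedPhaseJacobian, charpoly_fin_two_of_sq_eq_mul _ h_sq, h_sub, h_add]

theorem fluxJacobian_eq_reindex_fromBlocks (f b g q : ℝ) :
    fluxJacobian f b g q =
      Matrix.reindex finSumFinEquiv finSumFinEquiv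
        (Matrix.fromBlocks (advectedPhaseJacobian 0 f b) 0
          (Matrix.vecMulVec ![g, q] ![b, f]) (advectedPhaseJacobian (f * b) g q)) := by
  rw [← Equiv.symm_apply_eq]
  ext (i | i) (j | j) <;> fin_cases i <;> fin_cases j <;>
    simp [fluxJacobian, advectedPhaseJacobian, finSumFinEquiv, mul_comm]

theorem charpoly_fluxJacobian (f b g q : ℝ) :
    (fluxJacobian f b g q).charpoly =
      (X - C (f * b / 2)) * (X - C (3 * (f * b) / 2)) *
        ((X - C (f * b + g * q / 2)) * (X - C (f * b + 3 * (g * q) / 2))) := by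
  rw [fluxJacobian_eq_reindex_fromBlocks, Matrix.charpoly_reindex,
    Matrix.charpoly_fromBlocks_zero₁₂, charpoly_advectedPhaseJacobian,
    charpoly_advectedPhaseJacobian, zero_add, zero_add]

/-- The characteristic polynomial of the flux Jacobian factorizes with roots
`fb/2, 3fb/2, fb + gq/2, fb + 3gq/2`. -/
theorem charpoly_factorization (f b g q lam : ℝ) :
    Matrix.det (lam • (1 : Matrix (Fin 4) (Fin 4) ℝ) - fluxJacobian f b g q) =
      (lam - f*b/2) * (lam - 3*(f*b)/2) * (lam - (f*b + g*q/2)) *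
        (lam - (f*b + 3*(g*q)/2)) := by
  rw [Matrix.smul_one_eq_diagonal, ← Matrix.scalar_apply, ← Matrix.eval_charpoly,
    charpoly_fluxJacobian]
  simp only [eval_mul, eval_sub, eval_X, eval_C, mul_assoc]
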